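/- For a compact Hausdorff space K the following are equivalent: (a) K is π-monolithic; (b) for every totally disconnected Tychonoff space X such that C_p(X, 𝔻) is a Baire space, the space C_p(X, K) is a Baire space. -/

import Mathlib

open Set Topology Function

/-- `Cp X Y` : continuous functions from `X` to `Y` with the topology of pointwise
convergence, i.e. the subspace topology inherited from the product space `Y^X`. -/
abbrev Cp (X Y : Type*) [TopologicalSpace X] [TopologicalSpace Y] : Type _ :=
  {f : X → Y // Continuous f}

/-- A compact Hausdorff space `X` is π-monolithic if for every surjective continuous map
`f : X → K` onto a metrizable compact Hausdorff space `K` there exists a metrizable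
compact subspace `T ⊆ X` with `f(T) = K`. -/
def PiMonolithic (X : Type*) [TopologicalSpace X] [CompactSpace X] [T2Space X] : Prop :=
  ∀ (K : Type) (_ : TopologicalSpace K), CompactSpace K → T2Space K →
    TopologicalSpace.MetrizableSpace K →
    ∀ f : X → K, Continuous f → Surjective f →
      ∃ T : Set X, IsCompact T ∧ TopologicalSpace.MetrizableSpace T ∧ f '' T = Set.univ

/-!
`C_p(X, 𝔻)` is Baire iff the continuous `0`-`1` functions match infinitely many of the patterns
prescribed on any disjoint sequence of finite sets. A diagonal construction carries this property to
countable products, so `C_p(X, 2^ℕ)` is Baire as soon as `C_p(X, 𝔻)` is.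

If `K` is π-monolithic, a countable closure argument reduces a sequence of dense open sets of `K^X`
to a metrizable quotient `Q : K → M`. A metrizable compact `T ⊆ K` with `Q(T) = M` gives a map
`r : 2^ℕ → K` such that `Q ∘ r` is onto; shrinking `T` to make the cover irreducible makes `Q ∘ r`
quasi-open, so the dense open sets pull back along `r` to dense open sets of `(2^ℕ)^X`, where the
Baire property of `C_p(X, 2^ℕ)` applies.

Conversely, let `X ⊆ 2^X` be the rows of a symmetric `0`-`1` matrix realising every countable
prescription. Its columns show that `C_p(X, 𝔻)` is Baire, and every continuous map `X → K` extends
to the whole cube `2^X`. Given `f : K → M` onto, a generic continuous `X → K` has an image that is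
dense in `M` after applying `f`; countably many coordinates of its extension already see this, and
the image in `K` of the Cantor cube on these coordinates is the required `T`.
-/

section Cylinders

variable {Y α : Type*} [TopologicalSpace α] [DiscreteTopology α]

theorem nhds_hasBasis_eqOn_finset (f : Y → α) :
    (𝓝 f).HasBasis (fun _ : Finset Y => True) fun F => {g | EqOn g f F} := by
  rw [nhds_pi]
  simp only [nhds_discrete]
  exact (Filter.hasBasis_pi_pure f).to_hasBasis
    (fun I hI => ⟨hI.toFinset, trivial, fun g hg i hi => hg (hI.coe_toFinset.symm ▸ hi)⟩)
    (fun F _ => ⟨F, F.finite_toSet, fun _ hg => hg⟩)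

theorem isOpen_setOf_eqOn_finset (f : Y → α) (F : Finset Y) : IsOpen {g | EqOn g f F} := by
  have : {g | EqOn g f F} = (F : Set Y).pi fun y => {f y} := by ext g; simp [EqOn]
  exact this ▸ isOpen_set_pi F.finite_toSet fun _ _ => isOpen_discrete _

theorem dense_iff_exists_eqOn_finset {C : Set (Y → α)} :
    Dense C ↔ ∀ (h : Y → α) (F : Finset Y), ∃ f ∈ C, EqOn f h F := by
  simp only [Dense, mem_closure_iff_nhds_basis (nhds_hasBasis_eqOn_finset _), true_imp_iff,
    mem_ofPred_eq]

end Cylinders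

section DisjointSequences

variable {Y : Type*} {D : ℕ → Finset Y}

theorem exists_forall_ge_disjoint (hD : Pairwise (Disjoint on D)) (F : Finset Y) :
    ∃ N, ∀ n ≥ N, Disjoint F (D n) := by
  have hfin : {n | ¬ Disjoint F (D n)}.Finite := by
    refine (F.finite_toSet.biUnion (t := fun y => {n | y ∈ D n}) fun y _ =>
      Set.Subsingleton.finite fun m hm n hn => ?_).subset fun n hn => ?_
    · by_contra hmn
      exact Finset.disjoint_left.1 (hD hmn) hm hn
    · obtain ⟨y, hyF, hyD⟩ := Finset.not_disjoint_iff.1 hn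
      exact mem_biUnion hyF hyD
  obtain ⟨N, hN⟩ := hfin.bddAbove
  exact ⟨N + 1, fun n hn => not_not.1 fun h => absurd (hN h) (by omega)⟩

theorem exists_eqOn_finset_of_pairwise_disjoint {α : Type*} (hD : Pairwise (Disjoint on D))
    (g : ℕ → Y → α) {F : Finset Y} (hF : ∀ n, Disjoint F (D n)) (h : Y → α) :
    ∃ f : Y → α, EqOn f h F ∧ ∀ n, EqOn f (g n) (D n) := by
  classical
  refine ⟨fun y => if hy : ∃ n, y ∈ D n then g hy.choose y else h y, fun y hy => ?_,
    fun n y hy => ?_⟩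
  · exact dif_neg fun ⟨n, hn⟩ => Finset.disjoint_left.1 (hF n) hy hn
  · have hex : ∃ n, y ∈ D n := ⟨n, hy⟩
    have : hex.choose = n := by
      by_contra hne
      exact Finset.disjoint_left.1 (hD hne) hex.choose_spec hy
    simp only [dif_pos hex, this]

end DisjointSequences

section Separation

variable {X Z : Type*} [TopologicalSpace X] [TotallySeparatedSpace X] [TopologicalSpace Z]

theorem exists_isClopen_mem_disjoint_finset {a : X} {F : Finset X} (ha : a ∉ F) :
    ∃ U : Set X, IsClopen U ∧ a ∈ U ∧ ∀ y ∈ F, y ∉ U := by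
  have hsep : ∀ y ∈ F, ∃ U : Set X, IsClopen U ∧ a ∈ U ∧ y ∉ U := fun y hy =>
    exists_isClopen_of_totally_separated fun h : a = y => ha (h ▸ hy)
  choose! U hU haU hyU using hsep
  exact ⟨⋂ y ∈ F, U y, isClopen_biInter_finset hU, mem_iInter₂.2 haU,
    fun y hy hmem => hyU y hy (mem_iInter₂.1 hmem y hy)⟩

theorem exists_continuous_eqOn_finset (F : Finset X) (g : X → Z) :
    ∃ f : X → Z, Continuous f ∧ EqOn f g F := by
  classical
  rcases isEmpty_or_nonempty X with _ | ⟨⟨x₀⟩⟩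
  · exact ⟨g, continuous_of_discreteTopology, eqOn_refl g F⟩
  induction F using Finset.induction_on with
  | empty => exact ⟨fun _ => g x₀, continuous_const, by simp⟩
  | insert a F ha ih =>
    obtain ⟨f, hf, hfF⟩ := ih
    obtain ⟨U, hU, haU, hFU⟩ := exists_isClopen_mem_disjoint_finset ha
    refine ⟨U.piecewise (fun _ => g a) f,
      continuous_const.piecewise (by simp [hU.frontier_eq]) hf, fun x hx => ?_⟩
    rcases Finset.mem_insert.1 (Finset.mem_coe.1 hx) with rfl | hxF
    · exact piecewise_eq_of_mem _ _ _ haU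
    · exact (piecewise_eq_of_notMem _ _ _ (hFU x hxF)).trans (hfF hxF)

theorem dense_setOf_continuous : Dense {f : X → Z | Continuous f} := by
  intro h
  rw [mem_closure_iff]
  intro O hO hhO
  obtain ⟨F, u, hu, hFu⟩ := isOpen_pi_iff.1 hO h hhO
  obtain ⟨f, hf, hfF⟩ := exists_continuous_eqOn_finset F h
  exact ⟨f, hFu fun x hx => (hfF hx).symm ▸ (hu x hx).2, hf⟩

end Separation

theorem dense_preimage_coe_of_dense {Y : Type*} [TopologicalSpace Y] {s V : Set Y} (hs : Dense s)
    (hVo : IsOpen V) (hVd : Dense V) : Dense ((↑) ⁻¹' V : Set s) := by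
  rw [Subtype.dense_iff, Subtype.image_preimage_coe]
  exact fun y _ => hs.inter_of_isOpen_right hVd hVo y

theorem baireSpace_coe_iff_of_dense {Y : Type*} [TopologicalSpace Y] {s : Set Y} (hs : Dense s) :
    BaireSpace s ↔ ∀ V : ℕ → Set Y, (∀ n, IsOpen (V n)) → (∀ n, Dense (V n)) →
      Dense (s ∩ ⋂ n, V n) := by
  constructor
  · intro _ V hVo hVd
    have hdense : Dense (⋂ n, ((↑) ⁻¹' V n : Set s)) :=
      dense_iInter_of_isOpen_nat (fun n => (hVo n).preimage continuous_subtype_val)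
        fun n => dense_preimage_coe_of_dense hs (hVo n) (hVd n)
    simpa only [← preimage_iInter, Subtype.image_preimage_coe] using
      hs.denseRange_val.dense_image continuous_subtype_val hdense
  · refine fun h => ⟨fun U hUo hUd => ?_⟩
    choose V hVo hVd hVU using fun n =>
      exists_open_dense_of_open_dense_subtype hs (hUo n) (hUd n)
    simp only [← hVU, ← preimage_iInter]
    rw [Subtype.dense_iff, Subtype.image_preimage_coe]
    exact fun y _ => h V hVo hVd y

section InfiniteMatching

variable {X Y : Type*}

/-- A family `C` of `0`-`1` functions on `Y` has infinite matching if every pattern prescribed on a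
disjoint sequence of finite sets is realised by a member of `C` on infinitely many of these sets,
even when the values on one further finite set `E` are prescribed. The patterns live on disjoint
sets, so they are encoded by a single function `g`. -/
def HasInfiniteMatching (C : Set (Y → Bool)) : Prop :=
  ∀ D : ℕ → Finset Y, Pairwise (Disjoint on D) → ∀ (g : Y → Bool) (E : Finset Y),
    ∃ f ∈ C, EqOn f g E ∧ ∃ᶠ n in Filter.atTop, EqOn f g (D n)

theorem HasInfiniteMatching.dense {C : Set (Y → Bool)} (hC : HasInfiniteMatching C) : Dense C :=
  dense_iff_exists_eqOn_finset.2 fun h F =>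
    let ⟨f, hf, hfF, _⟩ := hC (fun _ => ∅) (fun _ _ _ => disjoint_bot_left) h F
    ⟨f, hf, hfF⟩

theorem exists_isOpen_dense_forall_eqOn_compl_mem {V : Set (Y → Bool)} (hVo : IsOpen V)
    (hVd : Dense V) (F : Finset Y) :
    ∃ W : Set (Y → Bool), IsOpen W ∧ Dense W ∧ ∀ f ∈ W, ∀ f', EqOn f' f (F : Set Y)ᶜ → f' ∈ V := by
  classical
  let flip (s : Finset Y) (f : Y → Bool) : Y → Bool := fun y => if y ∈ s then !f y else f y
  have flip_involutive (s : Finset Y) : Involutive (flip s) := fun f => by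
    ext y; by_cases hy : y ∈ s <;> simp [flip, hy]
  have flip_continuous (s : Finset Y) : Continuous (flip s) := continuous_pi fun y => by
    by_cases hy : y ∈ s <;> simp only [flip, hy, if_true, if_false] <;> fun_prop
  let e (s : Finset Y) : (Y → Bool) ≃ₜ (Y → Bool) :=
    ⟨(flip_involutive s).toPerm, flip_continuous s, flip_continuous s⟩
  refine ⟨⋂ s ∈ F.powerset, e s ⁻¹' V,
    isOpen_biInter_finset fun s _ => hVo.preimage (e s).continuous,
    dense_biInter_of_isOpen (S := (F.powerset : Set (Finset Y)))
      (fun s _ => hVo.preimage (e s).continuous) (Finset.countable_toSet _)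
      fun s _ => hVd.preimage (e s).isOpenMap, fun f hf f' hff' => ?_⟩
  have hflip : flip {y ∈ F | f' y ≠ f y} f = f' := by
    ext y
    by_cases hy : y ∈ F
    · cases hfy : f y <;> cases hfy' : f' y <;> simp [flip, hy, hfy, hfy']
    · simp [flip, hy, hff' hy]
  have := mem_iInter₂.1 hf {y ∈ F | f' y ≠ f y} (by simp)
  exact hflip ▸ this

theorem exists_disjoint_finset_forall_eqOn_mem {V : Set (Y → Bool)} (hVo : IsOpen V)
    (hVd : Dense V) (F : Finset Y) :
    ∃ (D : Finset Y) (g : Y → Bool), Disjoint F D ∧ ∀ f, EqOn f g D → f ∈ V := by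
  classical
  obtain ⟨W, hWo, hWd, hWV⟩ := exists_isOpen_dense_forall_eqOn_compl_mem hVo hVd F
  obtain ⟨g, hg⟩ := hWd.nonempty
  obtain ⟨G, -, hG⟩ := (nhds_hasBasis_eqOn_finset g).mem_iff.1 (hWo.mem_nhds hg)
  refine ⟨G \ F, g, Finset.disjoint_sdiff, fun f hf => ?_⟩
  refine hWV (F.piecewise g f) (hG fun y hy => ?_) f fun y hy => ?_
  · by_cases hyF : y ∈ F
    · exact F.piecewise_eq_of_mem _ _ hyF
    · exact (F.piecewise_eq_of_notMem _ _ hyF).trans (hf (by simpa [hyF] using hy))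
  · exact (F.piecewise_eq_of_notMem _ _ hy).symm

theorem exists_pairwise_disjoint_forall_frequently_eqOn_mem {V : ℕ → Set (Y → Bool)}
    (hVo : ∀ n, IsOpen (V n)) (hVd : ∀ n, Dense (V n)) (F : Finset Y) (h : Y → Bool) :
    ∃ D : ℕ → Finset Y, Pairwise (Disjoint on D) ∧ ∃ g : Y → Bool, EqOn g h F ∧
      ∀ f, (∃ᶠ n in Filter.atTop, EqOn f g (D n)) → ∀ i, f ∈ V i := by
  classical
  obtain ⟨t, ht, htlt⟩ := exists_seq_of_forall_finset_exists
    (fun t : ℕ × Finset Y × (Y → Bool) =>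
      Disjoint F t.2.1 ∧ ∀ f, EqOn f t.2.2 t.2.1 → ∀ i ≤ t.1, f ∈ V i)
    (fun t t' => t.1 < t'.1 ∧ Disjoint t.2.1 t'.2.1) fun s _ => by
      obtain ⟨D, g, hD, hDg⟩ := exists_disjoint_finset_forall_eqOn_mem
        (V := ⋂ i ∈ Iic (s.sup Prod.fst + 1), V i)
        ((finite_Iic _).isOpen_biInter fun i _ => hVo i)
        (dense_biInter_of_isOpen (fun i _ => hVo i) (to_countable _) fun i _ => hVd i)
        (F ∪ s.biUnion fun t => t.2.1)
      rw [Finset.disjoint_union_left, Finset.disjoint_biUnion_left] at hD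
      exact ⟨⟨_, D, g⟩, ⟨hD.1, fun f hf => mem_iInter₂.1 (hDg f hf)⟩,
        fun t hts => ⟨Nat.lt_succ_of_le (Finset.le_sup (f := Prod.fst) hts), hD.2 t hts⟩⟩
  have hdisj : Pairwise (Disjoint on fun n => (t n).2.1) :=
    (pairwise_disjoint_on _).2 fun m n hmn => (htlt m n hmn).2
  have hlevel : StrictMono fun n => (t n).1 := fun m n hmn => (htlt m n hmn).1
  obtain ⟨g, hgF, hgD⟩ :=
    exists_eqOn_finset_of_pairwise_disjoint hdisj (fun n => (t n).2.2) (fun n => (ht n).1) h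
  refine ⟨_, hdisj, g, hgF, fun f hf i => ?_⟩
  obtain ⟨n, hin, hn⟩ := Filter.frequently_atTop.1 hf i
  exact (ht n).2 f (hn.trans (hgD n)) i (hin.trans (hlevel.le_apply))

theorem dense_setOf_exists_ge_eqOn {α : Type*} [TopologicalSpace α] [DiscreteTopology α]
    {D : ℕ → Finset Y} (hD : Pairwise (Disjoint on D)) (g : Y → α) (N : ℕ) :
    Dense {f | ∃ n ≥ N, EqOn f g (D n)} := by
  classical
  refine dense_iff_exists_eqOn_finset.2 fun h F => ?_
  obtain ⟨M, hM⟩ := exists_forall_ge_disjoint hD F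
  have hdisj := hM (max M N) (le_max_left _ _)
  refine ⟨F.piecewise h g, ⟨max M N, le_max_right _ _, fun y hy => ?_⟩,
    fun y hy => F.piecewise_eq_of_mem _ _ hy⟩
  exact F.piecewise_eq_of_notMem _ _ (Finset.disjoint_right.1 hdisj hy)

theorem baireSpace_iff_hasInfiniteMatching {C : Set (Y → Bool)} (hC : Dense C) :
    BaireSpace C ↔ HasInfiniteMatching C := by
  rw [baireSpace_coe_iff_of_dense hC]
  constructor
  · intro hbaire D hD g E
    have hopen (N : ℕ) : IsOpen {f | ∃ n ≥ N, EqOn f g (D n)} := by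
      simp only [ofPred_exists, ofPred_and]
      exact isOpen_iUnion fun n => isOpen_const.inter (isOpen_setOf_eqOn_finset g (D n))
    obtain ⟨f, ⟨hfC, hf⟩, hfE⟩ := dense_iff_exists_eqOn_finset.1
      (hbaire _ hopen (dense_setOf_exists_ge_eqOn hD g)) g E
    exact ⟨f, hfC, hfE, Filter.frequently_atTop.2 (mem_iInter.1 hf)⟩
  · intro hmatch V hVo hVd
    refine dense_iff_exists_eqOn_finset.2 fun h F => ?_
    obtain ⟨D, hD, g, hgF, hDV⟩ :=
      exists_pairwise_disjoint_forall_frequently_eqOn_mem hVo hVd F h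
    obtain ⟨f, hfC, hfF, hfD⟩ := hmatch D hD g F
    exact ⟨f, ⟨hfC, mem_iInter.2 (hDV f hfD)⟩, hfF.trans hgF⟩

theorem HasInfiniteMatching.exists_infinite_setOf_eqOn {C : Set (Y → Bool)}
    (hC : HasInfiniteMatching C) {D : ℕ → Finset Y} (hD : Pairwise (Disjoint on D))
    {A : Set ℕ} (hA : A.Infinite) (g : Y → Bool) (E : Finset Y) :
    ∃ f ∈ C, EqOn f g E ∧ {n ∈ A | EqOn f g (D n)}.Infinite := by
  let e := hA.natEmbedding A
  obtain ⟨f, hfC, hfE, hf⟩ := hC (fun n => D (e n))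
    (hD.comp_of_injective (Subtype.val_injective.comp e.injective)) g E
  refine ⟨f, hfC, hfE, ((Nat.frequently_atTop_iff_infinite.1 hf).image
    (Subtype.val_injective.comp e.injective).injOn).mono ?_⟩
  rintro _ ⟨n, hn, rfl⟩
  exact ⟨(e n).2, hn⟩

/-- One coordinate of the diagonal construction: `E` collects the commitments made so far, and
only the indices in `A` are still available. -/
theorem HasInfiniteMatching.exists_slice_matching {C : Set (X → Bool)} (hC : HasInfiniteMatching C)
    {D : ℕ → Finset (X × ℕ)} (hD : Pairwise (Disjoint on D)) (g : X × ℕ → Bool) (i : ℕ)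
    (E : Finset (X × ℕ)) (A : {A : Set ℕ // A.Infinite}) :
    ∃ f ∈ C, ∃ n ≥ i, ∃ B : {B : Set ℕ // B.Infinite}, B.1 ⊆ A.1 ∧ n ∈ B.1 ∧
      (∀ x, (x, i) ∈ E → f x = g (x, i)) ∧ ∀ m ∈ B.1, ∀ x, (x, i) ∈ D m → f x = g (x, i) := by
  let slice (F : Finset (X × ℕ)) : Finset X :=
    F.preimage (fun x => (x, i)) (Prod.mk_left_injective i).injOn
  have hslice {F : Finset (X × ℕ)} {x : X} : x ∈ slice F ↔ (x, i) ∈ F := Finset.mem_preimage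
  have hDslice : Pairwise (Disjoint on fun n => slice (D n)) := fun m n hmn =>
    Finset.disjoint_left.2 fun x hm hn =>
      Finset.disjoint_left.1 (hD hmn) (hslice.1 hm) (hslice.1 hn)
  obtain ⟨f, hfC, hfE, hB⟩ :=
    hC.exists_infinite_setOf_eqOn hDslice A.2 (fun x => g (x, i)) (slice E)
  obtain ⟨n, hn, hin⟩ := hB.exists_gt i
  exact ⟨f, hfC, n, hin.le, ⟨_, hB⟩, sep_subset _ _, hn, fun x hx => hfE (hslice.2 hx),
    fun m hm x hx => hm.2 (hslice.2 hx)⟩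

theorem HasInfiniteMatching.prod_nat {C : Set (X → Bool)} (hC : HasInfiniteMatching C) :
    HasInfiniteMatching {f : X × ℕ → Bool | ∀ i, (fun x => f (x, i)) ∈ C} := by
  classical
  intro D hD g E₀
  choose f hfC n hin B hBA hnB hfE hfD using hC.exists_slice_matching hD g
  let S : ℕ → Finset (X × ℕ) × {A : Set ℕ // A.Infinite} :=
    Nat.rec (E₀, ⟨univ, infinite_univ⟩) fun i S => (S.1 ∪ D (n i S.1 S.2), B i S.1 S.2)
  let N (i : ℕ) : ℕ := n i (S i).1 (S i).2
  have hE : Monotone fun i => (S i).1 := monotone_nat_of_le_succ fun i => Finset.subset_union_left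
  have hA : Antitone fun i => (S i).2.1 := antitone_nat_of_succ_le fun i => hBA i _ _
  refine ⟨fun p => f p.2 (S p.2).1 (S p.2).2 p.1, fun i => hfC i (S i).1 (S i).2, ?_, ?_⟩
  · rintro ⟨x, i⟩ hx
    exact hfE i _ _ x (hE i.zero_le hx)
  · refine Filter.frequently_atTop.2 fun j => ⟨N j, hin j _ _, ?_⟩
    rintro ⟨x, i⟩ hx
    rcases lt_or_ge j i with hji | hij
    · exact hfE i _ _ x (hE (Nat.succ_le_of_lt hji) (Finset.mem_union_right _ hx))
    · exact hfD i _ _ (N j) (hA (Nat.succ_le_succ hij) (hnB j _ _)) x hx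

end InfiniteMatching

theorem baireSpace_cp_nat_bool {X : Type*} [TopologicalSpace X] [TotallySeparatedSpace X]
    (hX : BaireSpace (Cp X Bool)) : BaireSpace (Cp X (ℕ → Bool)) := by
  have hmatch : HasInfiniteMatching {f : X → Bool | Continuous f} :=
    (baireSpace_iff_hasInfiniteMatching dense_setOf_continuous).1 hX
  have hprod := (baireSpace_iff_hasInfiniteMatching hmatch.prod_nat.dense).2 hmatch.prod_nat
  let e : {f : X × ℕ → Bool | ∀ i, (fun x => f (x, i)) ∈ {f : X → Bool | Continuous f}} ≃ₜ
      Cp X (ℕ → Bool) := Homeomorph.piCurry.subtype fun f => continuous_pi_iff.symm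
  exact e.baireSpace

theorem exists_countable_superset_forall_finset_subset {α : Type*} {s : Finset α → Set α}
    (hs : ∀ p, (s p).Countable) {Z₀ : Set α} (hZ₀ : Z₀.Countable) :
    ∃ Z, Z₀ ⊆ Z ∧ Z.Countable ∧ ∀ p : Finset α, (p : Set α) ⊆ Z → s p ⊆ Z := by
  let step (Z : Set α) : Set α := Z ∪ ⋃ p ∈ {p : Finset α | (p : Set α) ⊆ Z}, s p
  have step_countable {Z : Set α} (hZ : Z.Countable) : (step Z).Countable := by
    have hp : {p : Finset α | (p : Set α) ⊆ Z}.Countable :=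
      ((countable_ofPred_finite_subset hZ).preimage Finset.coe_injective).mono
        fun p (hp : (p : Set α) ⊆ Z) => And.intro p.finite_toSet hp
    exact hZ.union (hp.biUnion fun p _ => hs p)
  have hmono : Monotone fun n => step^[n] Z₀ := monotone_nat_of_le_succ fun n => by
    rw [iterate_succ_apply']
    exact subset_union_left
  refine ⟨⋃ n, step^[n] Z₀, subset_iUnion (fun n => step^[n] Z₀) 0,
    countable_iUnion fun n => ?_, fun p hp => ?_⟩
  · induction n with
    | zero => exact hZ₀
    | succ n ih => exact iterate_succ_apply' step n Z₀ ▸ step_countable ih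
  · obtain ⟨n, hn⟩ := hmono.directed_le.exists_mem_subset_of_finset_subset_biUnion hp
    refine subset_iUnion_of_subset (n + 1) ?_
    rw [iterate_succ_apply']
    exact subset_union_of_subset_right (subset_biUnion_of_mem (u := s) hn) _

section CountablyFull

variable {Y W K : Type*}

/-- A family of `0`-`1` functions on `Y` is countably full if every prescription of values on a
countable subset of `Y` is realised by a member of the family. -/
def CountablyFull (C : Set (Y → Bool)) : Prop :=
  ∀ A : Set Y, A.Countable → ∀ b : Y → Bool, ∃ f ∈ C, EqOn f b A

theorem CountablyFull.hasInfiniteMatching {C : Set (Y → Bool)} (hC : CountablyFull C) :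
    HasInfiniteMatching C := fun D _ g E => by
  obtain ⟨f, hfC, hf⟩ := hC (E ∪ ⋃ n, D n)
    (E.countable_toSet.union (countable_iUnion fun n => (D n).countable_toSet)) g
  exact ⟨f, hfC, hf.mono subset_union_left, .of_forall fun n =>
    hf.mono ((subset_iUnion (fun n => (D n : Set Y)) n).trans subset_union_right)⟩

theorem CountablyFull.dense {C : Set (Y → Bool)} (hC : CountablyFull C) : Dense C :=
  hC.hasInfiniteMatching.dense

theorem CountablyFull.baireSpace {C : Set (Y → Bool)} (hC : CountablyFull C) : BaireSpace C :=
  (baireSpace_iff_hasInfiniteMatching hC.dense).2 hC.hasInfiniteMatching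

theorem exists_countable_forall_eqOn_mem_closure {α : Type*} [TopologicalSpace α]
    [DiscreteTopology α] {U : Set (Y → α)} (hU : IsOpen U) {b : Y → α} (hb : b ∈ closure U) :
    ∃ A : Set Y, A.Countable ∧ ∀ f, EqOn f b A → f ∈ closure U := by
  classical
  have hF (F : Finset Y) : ∃ (f : Y → α) (G : Finset Y), EqOn f b F ∧ ∀ g, EqOn g f G → g ∈ U := by
    obtain ⟨f, hfU, hf⟩ := (mem_closure_iff_nhds_basis (nhds_hasBasis_eqOn_finset b)).1 hb F trivial
    obtain ⟨G, -, hG⟩ := (nhds_hasBasis_eqOn_finset f).mem_iff.1 (hU.mem_nhds hfU)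
    exact ⟨f, G, hf, fun g hg => hG hg⟩
  choose u G hub hGU using hF
  obtain ⟨A, -, hA, hGA⟩ := exists_countable_superset_forall_finset_subset
    (fun F => (G F).countable_toSet) countable_empty
  refine ⟨A, hA, fun f hf => ?_⟩
  refine (mem_closure_iff_nhds_basis (nhds_hasBasis_eqOn_finset f)).2 fun F _ => ?_
  let p : Finset Y := {y ∈ F | y ∈ A}
  have hpA : (p : Set Y) ⊆ A := fun y hy => (Finset.mem_filter.1 hy).2
  refine ⟨A.piecewise (u p) f, hGU p _ fun y hy => ?_, fun y hy => ?_⟩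
  · exact piecewise_eq_of_mem _ _ _ (hGA p hpA hy)
  · by_cases hyA : y ∈ A
    · rw [piecewise_eq_of_mem _ _ _ hyA, hub p (Finset.mem_filter.2 ⟨hy, hyA⟩), hf hyA]
    · exact piecewise_eq_of_notMem _ _ _ hyA

variable [TopologicalSpace W] {i : W → Y → Bool}

theorem CountablyFull.exists_countable_forall_eqOn_mem_closure (hi : IsInducing i)
    (hfull : CountablyFull (range i)) {O : Set W} (hO : IsOpen O) {b : Y → Bool}
    (hb : b ∈ closure (i '' O)) :
    ∃ A : Set Y, A.Countable ∧ ∀ w, EqOn (i w) b A → w ∈ closure O := by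
  obtain ⟨U, hU, rfl⟩ := hi.isOpen_iff.1 hO
  obtain ⟨A, hA, hAU⟩ := _root_.exists_countable_forall_eqOn_mem_closure hU
    (closure_mono (image_preimage_subset _ _) hb)
  refine ⟨A, hA, fun w hw => ?_⟩
  rw [hi.closure_eq_preimage_closure_image, image_preimage_eq_inter_range]
  exact closure_minimal (hfull.dense.open_subset_closure_inter hU) isClosed_closure (hAU _ hw)

theorem CountablyFull.exists_tendsto_comap [TopologicalSpace K] [CompactSpace K] [T2Space K]
    (hi : IsInducing i) (hfull : CountablyFull (range i)) {φ : W → K} (hφ : Continuous φ)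
    (b : Y → Bool) : ∃ c, Filter.Tendsto φ (Filter.comap i (𝓝 b)) (𝓝 c) := by
  have := (IsDenseInducing.mk hi hfull.dense).comap_nhds_neBot b
  have hclosure {c : K} (hc : ClusterPt c (Filter.map φ (Filter.comap i (𝓝 b)))) {O : Set K}
      (hO : IsOpen O) (hcO : c ∈ O) : b ∈ closure (i '' (φ ⁻¹' O)) := by
    refine mem_closure_iff_nhds.2 fun U hU => ?_
    have hfreq := mapClusterPt_iff_frequently.1 hc O (hO.mem_nhds hcO)
    obtain ⟨w, hwO, hwU⟩ := (hfreq.and_eventually (Filter.preimage_mem_comap hU)).exists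
    exact ⟨i w, hwU, w, hwO, rfl⟩
  obtain ⟨c, hc⟩ := exists_clusterPt_of_compactSpace (Filter.map φ (Filter.comap i (𝓝 b)))
  refine ⟨c, le_nhds_of_unique_clusterPt fun c' hc' => ?_⟩
  by_contra hne
  obtain ⟨O', hcO', hO', O, hcO, hO, hdisj⟩ := exists_open_nhds_disjoint_closure hne
  obtain ⟨A, hA, hAO⟩ :=
    hfull.exists_countable_forall_eqOn_mem_closure hi (hO.preimage hφ) (hclosure hc hO hcO)
  obtain ⟨A', hA', hAO'⟩ :=
    hfull.exists_countable_forall_eqOn_mem_closure hi (hO'.preimage hφ) (hclosure hc' hO' hcO')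
  obtain ⟨_, ⟨w, rfl⟩, hw⟩ := hfull (A ∪ A') (hA.union hA') b
  exact disjoint_left.1 hdisj
    (hφ.closure_preimage_subset O' (hAO' w (hw.mono subset_union_right)))
    (hφ.closure_preimage_subset O (hAO w (hw.mono subset_union_left)))

theorem CountablyFull.exists_continuous_extension [TopologicalSpace K] [CompactSpace K] [T2Space K]
    (hi : IsInducing i) (hfull : CountablyFull (range i)) {φ : W → K} (hφ : Continuous φ) :
    ∃ Φ : (Y → Bool) → K, Continuous Φ ∧ Φ ∘ i = φ :=
  have di := IsDenseInducing.mk hi hfull.dense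
  ⟨di.extend φ, di.continuous_extend fun b => hfull.exists_tendsto_comap hi hφ b,
    funext fun w => di.extend_eq hφ w⟩

end CountablyFull

section QuasiOpen

variable {α β : Type*} [TopologicalSpace α] [TopologicalSpace β] {f : α → β}

/-- A map is quasi-open if the image of every nonempty open set has nonempty interior. -/
def IsQuasiOpenMap (f : α → β) : Prop :=
  ∀ O, IsOpen O → O.Nonempty → (interior (f '' O)).Nonempty

theorem IsQuasiOpenMap.dense_preimage (hf : IsQuasiOpenMap f) {D : Set β} (hD : Dense D) :
    Dense (f ⁻¹' D) := by
  refine dense_iff_inter_open.2 fun O hO hne => ?_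
  obtain ⟨_, hy, hyD⟩ := hD.inter_open_nonempty _ isOpen_interior (hf O hO hne)
  obtain ⟨x, hxO, rfl⟩ := interior_subset hy
  exact ⟨x, hxO, hyD⟩

theorem IsQuasiOpenMap.comp_isOpenMap {γ : Type*} [TopologicalSpace γ] (hf : IsQuasiOpenMap f)
    {g : γ → α} (hg : IsOpenMap g) : IsQuasiOpenMap (f ∘ g) := fun O hO hne => by
  rw [image_comp]
  exact hf _ (hg O hO) (hne.image g)

theorem IsQuasiOpenMap.piMap {ι : Type*} {A B : ι → Type*} [∀ i, TopologicalSpace (A i)]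
    [∀ i, TopologicalSpace (B i)] {f : ∀ i, A i → B i} (hf : ∀ i, IsQuasiOpenMap (f i))
    (hsurj : ∀ i, Surjective (f i)) : IsQuasiOpenMap (Pi.map f) := by
  rintro O hO ⟨a, ha⟩
  obtain ⟨F, u, hu, hFu⟩ := isOpen_pi_iff.1 hO a ha
  have hint (i : ι) : ∃ y, i ∈ F → y ∈ interior (f i '' u i) := by
    by_cases hi : i ∈ F
    · exact (hf i _ (hu i hi).1 ⟨a i, (hu i hi).2⟩).imp fun y hy _ => hy
    · exact ⟨f i (a i), fun h => absurd h hi⟩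
  choose b hb using hint
  have hsub : (F : Set ι).pi (fun i => interior (f i '' u i)) ⊆ Pi.map f '' O :=
    calc (F : Set ι).pi (fun i => interior (f i '' u i))
        ⊆ (F : Set ι).pi (fun i => f i '' u i) := pi_mono fun _ _ => interior_subset
      _ = Pi.map f '' (F : Set ι).pi u := (piMap_image_pi (fun i _ => hsurj i) u).symm
      _ ⊆ Pi.map f '' O := image_mono hFu
  exact ⟨b, interior_maximal hsub (isOpen_set_pi F.finite_toSet fun _ _ => isOpen_interior) hb⟩

theorem isQuasiOpenMap_of_forall_image_ne_univ (hf : IsClosedMap f)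
    (hsurj : Surjective f) (hirr : ∀ C, C ≠ univ → IsClosed C → f '' C ≠ univ) :
    IsQuasiOpenMap f := fun O hO hne => by
  obtain ⟨y, hy⟩ := (ne_univ_iff_exists_notMem _).1
    (hirr Oᶜ (by simpa using hne.ne_empty) hO.isClosed_compl)
  refine ⟨y, interior_maximal (t := (f '' Oᶜ)ᶜ) ?_ (hf _ hO.isClosed_compl).isOpen_compl hy⟩
  simpa using subset_image_compl hsurj (s := Oᶜ)

end QuasiOpen

section GreedyRetraction

open PiNat

variable {S : Set (ℕ → Bool)} {b : ℕ → Bool}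

theorem nhds_hasBasis_cylinder {E : ℕ → Type*} [∀ n, TopologicalSpace (E n)]
    [∀ n, DiscreteTopology (E n)] (x : ∀ n, E n) :
    (𝓝 x).HasBasis (fun _ => True) (cylinder x) := by
  refine ⟨fun U => ?_⟩
  rw [(isTopologicalBasis_cylinders E).mem_nhds_iff]
  constructor
  · rintro ⟨_, ⟨y, n, rfl⟩, hx, hU⟩
    exact ⟨n, trivial, (mem_cylinder_iff_eq.1 hx).trans_subset hU⟩
  · rintro ⟨n, -, hU⟩
    exact ⟨_, ⟨x, n, rfl⟩, self_mem_cylinder x n, hU⟩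

open Classical in
/-- Follow `b` as long as possible inside `S`: at each coordinate copy the value of `b` when some
point of `S` extends the values chosen so far in this way, and take the opposite value otherwise. -/
noncomputable def greedy (S : Set (ℕ → Bool)) (b : ℕ → Bool) : ℕ → Bool
  | n => if ∃ t ∈ S, (∀ i : Fin n, t i = greedy S b i) ∧ t n = b n then b n else !b n

open Classical in
theorem greedy_eq (S : Set (ℕ → Bool)) (b : ℕ → Bool) (n : ℕ) :
    greedy S b n = if ∃ t ∈ S ∩ cylinder (greedy S b) n, t n = b n then b n else !b n := by
  rw [greedy]
  refine if_congr ?_ rfl rfl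
  simp only [mem_inter_iff, mem_cylinder_iff, Fin.forall_iff, and_assoc]

theorem inter_cylinder_greedy_nonempty (hS : S.Nonempty) (b : ℕ → Bool) (n : ℕ) :
    (S ∩ cylinder (greedy S b) n).Nonempty := by
  induction n with
  | zero => simpa using hS
  | succ n ih =>
    suffices ∃ t ∈ S ∩ cylinder (greedy S b) n, t n = greedy S b n by
      obtain ⟨t, ⟨htS, ht⟩, htn⟩ := this
      exact ⟨t, htS, fun i hi => (Nat.lt_succ_iff_lt_or_eq.1 hi).elim (ht i) fun h => h ▸ htn⟩
    rw [greedy_eq]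
    split_ifs with hex
    · exact hex
    · obtain ⟨t, ht⟩ := ih
      exact ⟨t, ht, Bool.eq_not_of_ne fun h => hex ⟨t, ht, h⟩⟩

theorem greedy_mem (hS : S.Nonempty) (hSc : IsClosed S) (b : ℕ → Bool) : greedy S b ∈ S := by
  refine hSc.closure_subset <|
    (mem_closure_iff_nhds_basis (nhds_hasBasis_cylinder _)).2 fun n _ => ?_
  exact inter_cylinder_greedy_nonempty hS b n

theorem greedy_mem_cylinder {b' : ℕ → Bool} {n : ℕ} (h : b' ∈ cylinder b n) :
    greedy S b' ∈ cylinder (greedy S b) n := by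
  intro i
  induction i using Nat.strong_induction_on with
  | _ i ih =>
    intro hi
    have hcyl : cylinder (greedy S b') i = cylinder (greedy S b) i :=
      mem_cylinder_iff_eq.1 fun j hj => ih j hj (hj.trans hi)
    rw [greedy_eq, greedy_eq, hcyl, h i hi]

theorem greedy_eq_of_mem {s : ℕ → Bool} (hs : s ∈ S) {n : ℕ} (hsb : s ∈ cylinder (greedy S b) n)
    {b' : ℕ → Bool} (hb' : b' ∈ cylinder b n) (hb's : ∀ i ≥ n, b' i = s i) : greedy S b' = s := by
  ext i
  induction i using Nat.strong_induction_on with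
  | _ i ih =>
    rcases lt_or_ge i n with hi | hi
    · rw [greedy_mem_cylinder hb' i hi, hsb i hi]
    · rw [greedy_eq, if_pos ⟨s, ⟨hs, fun j hj => (ih j hj).symm⟩, (hb's i hi).symm⟩, hb's i hi]

theorem continuous_greedy : Continuous (greedy S) :=
  continuous_iff_continuousAt.2 fun b =>
    ((nhds_hasBasis_cylinder b).tendsto_iff (nhds_hasBasis_cylinder _)).2 fun n _ =>
      ⟨n, trivial, fun _ => greedy_mem_cylinder⟩

theorem exists_continuous_isOpenMap_surjective_of_isClosed (hS : S.Nonempty) (hSc : IsClosed S) :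
    ∃ ρ : (ℕ → Bool) → S, Continuous ρ ∧ IsOpenMap ρ ∧ Surjective ρ := by
  refine ⟨fun b => ⟨greedy S b, greedy_mem hS hSc b⟩, continuous_greedy.subtype_mk _,
    isOpenMap_iff_nhds_le.2 fun b => ?_, fun s => ⟨s, ?_⟩⟩
  · refine ((nhds_hasBasis_cylinder b).map _).ge_iff.2 fun n _ => ?_
    rw [nhds_subtype_eq_comap]
    refine Filter.mem_comap.2
      ⟨_, (nhds_hasBasis_cylinder (greedy S b)).mem_of_mem (i := n) trivial, fun s hs => ?_⟩
    refine ⟨fun i => if i < n then b i else s.1 i, fun i hi => if_pos hi, Subtype.ext ?_⟩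
    exact greedy_eq_of_mem s.2 hs (fun i hi => if_pos hi) fun i hi => if_neg hi.not_gt
  · exact Subtype.ext (greedy_eq_of_mem s.2 (n := 0) (b := s) (by simp) (by simp) fun _ _ => rfl)

end GreedyRetraction

theorem exists_continuous_comp_isQuasiOpenMap {M : Type} [TopologicalSpace M] [T2Space M]
    {P : (ℕ → Bool) → M} (hP : Continuous P) (hsurj : Surjective P) :
    ∃ ψ : (ℕ → Bool) → ℕ → Bool, Continuous ψ ∧ Surjective (P ∘ ψ) ∧ IsQuasiOpenMap (P ∘ ψ) := by
  obtain ⟨S, hScompact, hS, hirr⟩ := exists_compact_surjective_zorn_subset hP hsurj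
  have hPS : Surjective (S.domRestrict P) := fun y => by
    obtain ⟨s, hs, rfl⟩ := hS.ge (mem_univ y)
    exact ⟨⟨s, hs⟩, rfl⟩
  have hqo : IsQuasiOpenMap (S.domRestrict P) :=
    isQuasiOpenMap_of_forall_image_ne_univ (hP.comp continuous_subtype_val).isClosedMap hPS hirr
  have hSne : S.Nonempty := image_nonempty.1 (hS ▸ hsurj.range_eq ▸ range_nonempty P)
  obtain ⟨ρ, hρ, hρo, hρs⟩ := exists_continuous_isOpenMap_surjective_of_isClosed hSne
    (isCompact_iff_compactSpace.2 hScompact).isClosed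
  exact ⟨fun b => ρ b, continuous_subtype_val.comp hρ, hPS.comp hρs, hqo.comp_isOpenMap hρo⟩

theorem PiMonolithic.exists_continuous_comp_isQuasiOpenMap {K : Type*} [TopologicalSpace K]
    [CompactSpace K] [T2Space K] (hK : PiMonolithic K) {M : Type} [TopologicalSpace M]
    [CompactSpace M] [T2Space M] [TopologicalSpace.MetrizableSpace M] [Nonempty M] {Q : K → M}
    (hQ : Continuous Q) (hsurj : Surjective Q) :
    ∃ r : (ℕ → Bool) → K, Continuous r ∧ Surjective (Q ∘ r) ∧ IsQuasiOpenMap (Q ∘ r) := by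
  obtain ⟨T, hT, hTm, hQT⟩ := hK M _ ‹_› ‹_› ‹_› Q hQ hsurj
  have := isCompact_iff_compactSpace.1 hT
  have : Nonempty T := (image_nonempty.1 (hQT ▸ univ_nonempty)).to_subtype
  let := TopologicalSpace.metrizableSpaceMetric T
  obtain ⟨p, hp, hps⟩ := exists_nat_bool_continuous_surjective_of_compact T
  have hQp : Surjective (fun b => Q (p b)) := fun y => by
    obtain ⟨t, ht, rfl⟩ := hQT.ge (mem_univ y)
    obtain ⟨b, hb⟩ := hps ⟨t, ht⟩
    exact ⟨b, congrArg (Q ·.1) hb⟩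
  obtain ⟨ψ, hψ, hψs, hψo⟩ := _root_.exists_continuous_comp_isQuasiOpenMap
    (hQ.comp (continuous_subtype_val.comp hp)) hQp
  exact ⟨fun b => p (ψ b), continuous_subtype_val.comp (hp.comp hψ), hψs, hψo⟩

section Reflection

open scoped Classical in
/-- A set `J` of coordinates of the family of maps `e` reflects `V ⊆ Y` if every point of `Y` can be
moved into `V`, by an amount that is small on `J`, in such a way that membership in `V` is decided
by the coordinates in `J`. -/
def Reflects {Y ι R : Type*} [TopologicalSpace R] (e : Y → ι → R) (J : Set ι) (V : Set Y) : Prop :=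
  ∀ y₀ O, IsOpen O → e y₀ ∈ O →
    ∃ y, J.piecewise (e y) (e y₀) ∈ O ∧ ∀ y', EqOn (e y') (e y) J → y' ∈ V

variable {Y ι R : Type*} [TopologicalSpace Y] [TopologicalSpace R] {e : Y → ι → R}

theorem exists_finset_forall_eqOn_mem (he : IsInducing e) {V : Set Y} (hV : IsOpen V) {y : Y}
    (hy : y ∈ V) : ∃ F : Finset ι, ∀ y', EqOn (e y') (e y) F → y' ∈ V := by
  obtain ⟨U, hU, rfl⟩ := he.isOpen_iff.1 hV
  obtain ⟨F, u, hu, hFu⟩ := isOpen_pi_iff.1 hU _ hy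
  exact ⟨F, fun y' hy' => hFu fun i hi => (hy' hi).symm ▸ (hu i hi).2⟩

variable [SecondCountableTopology R]

theorem exists_countable_forall_exists_eqOn_mem (he : IsInducing e) {V : Set Y} (hVo : IsOpen V)
    (hVd : Dense V) (p : Finset ι) :
    ∃ W : Set ι, W.Countable ∧ ∀ O : Set (p → R), IsOpen O → ∀ y₀, p.restrict (e y₀) ∈ O →
      ∃ y, p.restrict (e y) ∈ O ∧ ∀ y', EqOn (e y') (e y) W → y' ∈ V := by
  have hbasis (B : Set (p → R)) : ∃ F : Finset ι, IsOpen B → ∀ y₀, p.restrict (e y₀) ∈ B →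
      ∃ y, p.restrict (e y) ∈ B ∧ ∀ y', EqOn (e y') (e y) F → y' ∈ V := by
    by_cases hB : IsOpen B ∧ ∃ y₀, p.restrict (e y₀) ∈ B
    · have hcont : Continuous fun y => p.restrict (e y) := by
        exact (Finset.continuous_restrict p).comp he.continuous
      obtain ⟨y, hyB, hyV⟩ := hVd.inter_open_nonempty _ (hB.1.preimage hcont) hB.2
      obtain ⟨F, hF⟩ := exists_finset_forall_eqOn_mem he hVo hyV
      exact ⟨F, fun _ _ _ => ⟨y, hyB, hF⟩⟩
    · exact ⟨∅, fun hBo y₀ hy₀ => absurd ⟨hBo, y₀, hy₀⟩ hB⟩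
  choose F hF using hbasis
  have hBasis := TopologicalSpace.isBasis_countableBasis (p → R)
  refine ⟨⋃ B ∈ TopologicalSpace.countableBasis (p → R), F B,
    (TopologicalSpace.countable_countableBasis _).biUnion fun B _ => (F B).countable_toSet,
    fun O hO y₀ hy₀ => ?_⟩
  obtain ⟨B, hB, hy₀B, hBO⟩ := hBasis.exists_subset_of_mem_open hy₀ hO
  obtain ⟨y, hyB, hy⟩ := hF B (hBasis.isOpen hB) y₀ hy₀B
  exact ⟨y, hBO hyB, fun y' hy' => hy y' fun i hi => hy' (mem_biUnion hB hi)⟩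

theorem exists_countable_superset_reflects (he : IsInducing e) {V : ℕ → Set Y}
    (hVo : ∀ n, IsOpen (V n)) (hVd : ∀ n, Dense (V n)) {s : Finset ι → Set ι}
    (hs : ∀ p, (s p).Countable) {J₀ : Set ι} (hJ₀ : J₀.Countable) :
    ∃ J, J₀ ⊆ J ∧ J.Countable ∧ (∀ p : Finset ι, (p : Set ι) ⊆ J → s p ⊆ J) ∧
      ∀ n, Reflects e J (V n) := by
  classical
  choose W hWc hW using fun n => exists_countable_forall_exists_eqOn_mem he (hVo n) (hVd n)
  obtain ⟨J, hJ₀J, hJ, hsJ⟩ := exists_countable_superset_forall_finset_subset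
    (s := fun p => s p ∪ ⋃ n, W n p) (fun p => (hs p).union (countable_iUnion (hWc · p))) hJ₀
  refine ⟨J, hJ₀J, hJ, fun p hp => subset_union_left.trans (hsJ p hp), fun n y₀ O hO hy₀ => ?_⟩
  obtain ⟨F, u, hu, hFu⟩ := isOpen_pi_iff.1 hO _ hy₀
  let p : Finset ι := {i ∈ F | i ∈ J}
  have hWJ : W n p ⊆ J := (subset_iUnion (W · p) n).trans
    (subset_union_right.trans (hsJ p fun i hi => (Finset.mem_filter.1 hi).2))
  have hmem (i : p) : i.1 ∈ F := (Finset.mem_filter.1 i.2).1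
  obtain ⟨y, hyu, hy⟩ := hW n p (univ.pi fun i => u i)
    (isOpen_set_pi finite_univ fun i _ => (hu i (hmem i)).1) y₀ fun i _ => (hu i (hmem i)).2
  refine ⟨y, hFu fun i hi => ?_, fun y' hy' => hy y' (hy'.mono hWJ)⟩
  by_cases hiJ : i ∈ J
  · exact (piecewise_eq_of_mem _ _ _ hiJ).symm ▸
      hyu ⟨i, Finset.mem_filter.2 ⟨hi, hiJ⟩⟩ (mem_univ _)
  · exact (piecewise_eq_of_notMem _ _ _ hiJ).symm ▸ (hu i hi).2

end Reflection

section MetrizableQuotient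

variable {X K : Type*} [TopologicalSpace K]

theorem Reflects.dense_kernImage {V : Set (X → K)} {E : Set X} {q : ℕ → C(K, ℝ)}
    (hV : Reflects (fun (f : X → K) (c : X × C(K, ℝ)) => c.2 (f c.1)) (E ×ˢ range q) V) :
    Dense (kernImage
      (rangeFactorization (fun k n => q n k) ∘ · : (X → K) → X → range fun k n => q n k) V) := by
  classical
  set Q : K → ℕ → ℝ := fun k n => q n k
  refine dense_iff_inter_open.2 fun O hO ⟨h₀, hh₀⟩ => ?_
  obtain ⟨f₀, rfl⟩ := (rangeFactorization_surjective (f := Q)).comp_left h₀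
  obtain ⟨O', hO', rfl⟩ := (IsInducing.piMap fun _ : X => IsInducing.subtypeVal).isOpen_iff.1 hO
  have hθ : Continuous fun (z : X × C(K, ℝ) → ℝ) (x : X) (n : ℕ) => z (x, q n) :=
    continuous_pi fun x => continuous_pi fun n => continuous_apply (x, q n)
  obtain ⟨f, hfO, hfV⟩ := hV f₀ _ (hO'.preimage hθ) hh₀
  refine ⟨rangeFactorization Q ∘ E.piecewise f f₀, ?_, fun f' hf' => hfV f' ?_⟩
  · suffices Q ∘ E.piecewise f f₀ ∈ O' from this
    convert mem_preimage.1 hfO using 1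
    ext x n
    by_cases hx : x ∈ E <;> simp [Q, hx]
  · rintro ⟨x, _⟩ ⟨hx, n, rfl⟩
    have hx' := congrArg Subtype.val (congrFun hf' x)
    simpa [Q, hx] using congrFun hx' n

variable [CompactSpace K] [T2Space K]

theorem isInducing_eval_continuousMap :
    IsInducing fun (f : X → K) (c : X × C(K, ℝ)) => c.2 (f c.1) := by
  have hcont : Continuous fun (k : K) (φ : C(K, ℝ)) => φ k := continuous_pi fun φ => φ.continuous
  have hinj : Injective fun (k : K) (φ : C(K, ℝ)) => φ k := fun k k' h => by
    by_contra hne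
    obtain ⟨φ, hφ, hne⟩ := separatesPoints_continuous_of_t35Space hne
    exact hne (congrFun h ⟨φ, hφ⟩)
  have hX := IsInducing.piMap fun _ : X => (hcont.isClosedEmbedding hinj).isInducing
  exact Homeomorph.piCurry.symm.isInducing.comp hX

theorem exists_continuous_forall_dense_kernImage [Nonempty X] {V : ℕ → Set (X → K)}
    (hVo : ∀ n, IsOpen (V n)) (hVd : ∀ n, Dense (V n)) {G : Set (X → K)} (hG : IsOpen G)
    {f₀ : X → K} (hf₀ : f₀ ∈ G) :
    ∃ Q : K → ℕ → ℝ, Continuous Q ∧ (∀ f, Q ∘ f = Q ∘ f₀ → f ∈ G) ∧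
      ∀ n, Dense (kernImage (rangeFactorization Q ∘ · : (X → K) → X → range Q) (V n)) := by
  classical
  have he := isInducing_eval_continuousMap (X := X) (K := K)
  obtain ⟨F, hF⟩ := exists_finset_forall_eqOn_mem he hG hf₀
  obtain ⟨J, hFJ, hJ, hprod, hVJ⟩ := exists_countable_superset_reflects he hVo hVd
    (s := fun p => (p.image Prod.fst ×ˢ p.image Prod.snd : Finset _))
    (fun p => Finset.countable_toSet _)
    (F.countable_toSet.insert (Classical.arbitrary X, (0 : C(K, ℝ))))
  obtain ⟨hJne, hFJ⟩ := insert_subset_iff.1 hFJ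
  obtain ⟨q, hq⟩ := (hJ.image Prod.snd).exists_eq_range ⟨_, _, hJne, rfl⟩
  have hJq : J = (Prod.fst '' J) ×ˢ range q := by
    refine hq ▸ subset_antisymm subset_fst_image_prod_snd_image ?_
    rintro ⟨_, _⟩ ⟨⟨c, hc, rfl⟩, d, hd, rfl⟩
    exact hprod {c, d} (by simp [insert_subset_iff, hc, hd]) (by simp)
  refine ⟨fun k n => q n k, continuous_pi fun n => (q n).continuous, fun f hf => hF f ?_,
    fun n => Reflects.dense_kernImage (hJq ▸ hVJ n)⟩
  refine EqOn.mono hFJ (hJq ▸ ?_)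
  rintro ⟨x, _⟩ ⟨-, n, rfl⟩
  exact congrFun (congrFun hf x) n

end MetrizableQuotient

theorem PiMonolithic.baireSpace_cp {K : Type*} [TopologicalSpace K] [CompactSpace K] [T2Space K]
    (hK : PiMonolithic K) {X : Type*} [TopologicalSpace X] [TotallySeparatedSpace X]
    (hX : BaireSpace (Cp X Bool)) : BaireSpace (Cp X K) := by
  rcases isEmpty_or_nonempty X with _ | _
  · have : Subsingleton (Cp X K) := inferInstance
    exact baire_of_finite
  refine (baireSpace_coe_iff_of_dense dense_setOf_continuous).2 fun V hVo hVd => ?_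
  refine dense_iff_inter_open.2 fun G hG ⟨f₀, hf₀⟩ => ?_
  obtain ⟨Q, hQ, hQG, hQV⟩ := exists_continuous_forall_dense_kernImage hVo hVd hG hf₀
  have : CompactSpace (range Q) := isCompact_iff_compactSpace.1 (isCompact_range hQ)
  have : Nonempty (range Q) := ⟨rangeFactorization Q (f₀ (Classical.arbitrary X))⟩
  obtain ⟨r, hr, hrs, hro⟩ := hK.exists_continuous_comp_isQuasiOpenMap
    (hQ.subtype_mk fun k => mem_range_self k) rangeFactorization_surjective
  have hrX : Continuous fun (h : X → ℕ → Bool) => r ∘ h :=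
    continuous_pi fun x => hr.comp (continuous_apply x)
  have hdense (n : ℕ) : Dense ((r ∘ · : (X → ℕ → Bool) → X → K) ⁻¹' V n) := by
    refine ((IsQuasiOpenMap.piMap (fun _ : X => hro) fun _ => hrs).dense_preimage (hQV n)).mono ?_
    exact fun h hh => hh rfl
  obtain ⟨h₀, hh₀⟩ := hrs.comp_left (rangeFactorization Q ∘ f₀)
  obtain ⟨h, hhG, hh, hhV⟩ := ((baireSpace_coe_iff_of_dense dense_setOf_continuous).1
    (baireSpace_cp_nat_bool hX) _ (fun n => (hVo n).preimage hrX) hdense).inter_open_nonempty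
    _ (hG.preimage hrX) ⟨h₀, hQG _ (congrArg (Subtype.val ∘ ·) hh₀)⟩
  exact ⟨r ∘ h, hhG, hr.comp hh, mem_iInter.2 fun n => mem_iInter.1 hhV n⟩

theorem secondCountableTopology_of_isProperMap {S T : Type*} [TopologicalSpace S]
    [SecondCountableTopology S] [TopologicalSpace T] {q : S → T} (hq : IsProperMap q)
    (hsurj : Surjective q) : SecondCountableTopology T := by
  let 𝒰 : Set (Set (Set S)) := {𝒜 | 𝒜.Finite ∧ 𝒜 ⊆ TopologicalSpace.countableBasis S}
  have hB := TopologicalSpace.isBasis_countableBasis S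
  have h𝒰 : 𝒰.Countable :=
    countable_ofPred_finite_subset (TopologicalSpace.countable_countableBasis S)
  refine (TopologicalSpace.isTopologicalBasis_of_isOpen_of_nhds
    (s := (fun 𝒜 => kernImage q (⋃₀ 𝒜)) '' 𝒰) ?_ fun y O hy hO => ?_).secondCountableTopology
      (h𝒰.image _)
  · rintro _ ⟨𝒜, h𝒜, rfl⟩
    exact isClosedMap_iff_kernImage.1 hq.isClosedMap
      (isOpen_sUnion fun B hB' => hB.isOpen (h𝒜.2 hB'))
  · have hfiber : ∀ x ∈ q ⁻¹' {y}, ∃ B ∈ TopologicalSpace.countableBasis S, x ∈ B ∧ B ⊆ q ⁻¹' O :=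
      fun x hx => hB.exists_subset_of_mem_open (by rwa [mem_preimage, hx])
        (hO.preimage hq.continuous)
    choose! B hBmem hxB hBO using hfiber
    obtain ⟨t, ht, hcover⟩ := (hq.isCompact_preimage isCompact_singleton).elim_nhds_subcover B
      fun x hx => (hB.isOpen (hBmem x hx)).mem_nhds (hxB x hx)
    refine ⟨_, ⟨B '' t, ⟨t.finite_toSet.image B, image_subset_iff.2 fun x hx => hBmem x (ht x hx)⟩,
      rfl⟩, fun x hx => ?_, fun y' hy' => ?_⟩
    · simpa using hcover hx
    · obtain ⟨x, rfl⟩ := hsurj y'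
      obtain ⟨_, ⟨x', hx', rfl⟩, hxB'⟩ := hy' rfl
      exact hBO x' (ht x' hx') hxB'

theorem metrizableSpace_range {S K : Type*} [TopologicalSpace S] [CompactSpace S]
    [SecondCountableTopology S] [TopologicalSpace K] [T2Space K] {p : S → K} (hp : Continuous p) :
    TopologicalSpace.MetrizableSpace (range p) := by
  have : CompactSpace (range p) := isCompact_iff_compactSpace.1 (isCompact_range hp)
  have := secondCountableTopology_of_isProperMap (hp.subtype_mk mem_range_self).isProperMap
    rangeFactorization_surjective
  infer_instance

section PiMonolithicOfBaire

variable {W Y K M : Type*} [TopologicalSpace K] [TopologicalSpace M]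

theorem dense_setOf_exists_apply_mem [Infinite W] {U : Set K} (hU : U.Nonempty) :
    Dense {φ : W → K | ∃ x, φ x ∈ U} := by
  classical
  refine dense_iff_inter_open.2 fun O hO ⟨φ, hφ⟩ => ?_
  obtain ⟨F, u, hu, hFu⟩ := isOpen_pi_iff.1 hO φ hφ
  obtain ⟨y, hy⟩ := Infinite.exists_notMem_finset F
  obtain ⟨k, hk⟩ := hU
  refine ⟨update φ y k, hFu fun x hx => ?_, y, by rwa [update_self]⟩
  rw [update_of_ne (ne_of_mem_of_not_mem hx hy)]
  exact (hu x hx).2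

theorem isOpen_setOf_exists_apply_mem {U : Set K} (hU : IsOpen U) :
    IsOpen {φ : W → K | ∃ x, φ x ∈ U} := by
  rw [ofPred_exists]
  exact isOpen_iUnion fun x => hU.preimage (continuous_apply x)

theorem exists_continuous_denseRange_comp [SecondCountableTopology M] [Nonempty K]
    [TopologicalSpace W] [Infinite W] [TotallySeparatedSpace W] (hWK : BaireSpace (Cp W K))
    {f : K → M} (hf : Continuous f) (hdense : DenseRange f) :
    ∃ φ : W → K, Continuous φ ∧ DenseRange (f ∘ φ) := by
  have hB := TopologicalSpace.isBasis_countableBasis M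
  have : Nonempty (Cp W K) := ⟨fun _ => Classical.arbitrary K, continuous_const⟩
  have hdenseB : Dense (⋂ B ∈ TopologicalSpace.countableBasis M,
      {φ : Cp W K | ∃ x, φ.1 x ∈ f ⁻¹' B}) := by
    refine dense_biInter_of_isOpen (fun B hBM => ?_)
      (TopologicalSpace.countable_countableBasis M) fun B hBM => ?_
    · exact (isOpen_setOf_exists_apply_mem ((hB.isOpen hBM).preimage hf)).preimage
        continuous_subtype_val
    · have hne : (f ⁻¹' B).Nonempty := hdense.exists_mem_open (hB.isOpen hBM)
        (TopologicalSpace.nonempty_of_mem_countableBasis hBM)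
      exact dense_preimage_coe_of_dense dense_setOf_continuous
        (isOpen_setOf_exists_apply_mem ((hB.isOpen hBM).preimage hf))
        (dense_setOf_exists_apply_mem hne)
  obtain ⟨φ, hφ⟩ := hdenseB.nonempty
  refine ⟨φ, φ.2, hB.dense_iff.2 fun B hBM _ => ?_⟩
  obtain ⟨x, hx⟩ := mem_iInter₂.1 hφ B hBM
  exact ⟨_, hx, x, rfl⟩

theorem exists_countable_denseRange_comp_extend [SecondCountableTopology M]
    {g : (Y → Bool) → M} (hg : Continuous g) (hdense : DenseRange g) :
    ∃ A : Set Y, A.Countable ∧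
      DenseRange fun a : A → Bool => g (extend Subtype.val a fun _ => false) := by
  have hB := TopologicalSpace.isBasis_countableBasis M
  have hfinite : ∀ B ∈ TopologicalSpace.countableBasis M, ∃ (h : Y → Bool) (G : Finset Y),
      ∀ h', EqOn h' h G → g h' ∈ B := fun B hBM => by
    obtain ⟨h, hh⟩ := hdense.exists_mem_open (hB.isOpen hBM)
      (TopologicalSpace.nonempty_of_mem_countableBasis hBM)
    obtain ⟨G, -, hG⟩ := (nhds_hasBasis_eqOn_finset h).mem_iff.1
      (((hB.isOpen hBM).preimage hg).mem_nhds hh)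
    exact ⟨h, G, fun h' hh' => hG hh'⟩
  choose! h G hG using hfinite
  refine ⟨⋃ B ∈ TopologicalSpace.countableBasis M, G B,
    (TopologicalSpace.countable_countableBasis M).biUnion fun B _ => (G B).countable_toSet,
    hB.dense_iff.2 fun B hBM _ => ⟨_, hG B hBM _ fun y hy => ?_, fun y => h B y, rfl⟩⟩
  exact Subtype.val_injective.extend_apply _ _
    (⟨y, mem_biUnion hBM hy⟩ : ⋃ B ∈ TopologicalSpace.countableBasis M, (G B : Set Y))

theorem continuous_extend_subtypeVal {A : Set Y} {Z : Type*} [TopologicalSpace Z] (z : Y → Z) :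
    Continuous fun a : A → Z => extend Subtype.val a z := by
  refine continuous_pi fun y => ?_
  by_cases hy : y ∈ A
  · exact (continuous_apply (⟨y, hy⟩ : A)).congr fun a =>
      (Subtype.val_injective.extend_apply a z ⟨y, hy⟩).symm
  · exact continuous_const.congr fun a => (extend_apply' a z y (by simpa using hy)).symm

theorem PiMonolithic.of_baireSpace_cp {K : Type*} [TopologicalSpace K] [CompactSpace K] [T2Space K]
    [TopologicalSpace W] [Infinite W] [TotallySeparatedSpace W] {i : W → Y → Bool}
    (hi : IsInducing i) (hfull : CountablyFull (range i)) (hWK : BaireSpace (Cp W K)) :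
    PiMonolithic K := by
  intro M _ _ _ _ f hf hsurj
  obtain hK | hK := isEmpty_or_nonempty K
  · have := hsurj.isEmpty
    exact ⟨∅, isCompact_empty, inferInstance, Subsingleton.elim _ _⟩
  obtain ⟨φ, hφ, hfφ⟩ := exists_continuous_denseRange_comp hWK hf hsurj.denseRange
  obtain ⟨Φ, hΦ, rfl⟩ := hfull.exists_continuous_extension hi hφ
  have hfΦ : DenseRange (f ∘ Φ) := hfφ.mono (range_comp_subset_range i (f ∘ Φ))
  obtain ⟨A, hA, hfA⟩ := exists_countable_denseRange_comp_extend (hf.comp hΦ) hfΦ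
  have := hA.to_subtype
  let p : (A → Bool) → K := fun a => Φ (extend Subtype.val a fun _ => false)
  have hp : Continuous p := hΦ.comp (continuous_extend_subtypeVal _)
  refine ⟨range p, isCompact_range hp, metrizableSpace_range hp, ?_⟩
  rw [← range_comp, ← (isCompact_range (hf.comp hp)).isClosed.closure_eq]
  exact hfA.closure_eq

end PiMonolithicOfBaire

section TestSpace

/-- The points of the test space: well-founded trees in which a node has a sequence of children,
each carrying a Boolean mark. A node encodes a prescription of values on its countable set of
children, which is how it will realise that prescription. -/
inductive MarkedTree : Type
  | leaf : MarkedTree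
  | node (child : ℕ → MarkedTree) (mark : ℕ → Bool) : MarkedTree

namespace MarkedTree

/-- `IsMarkedChild v u` says that `v` occurs with mark `true` among the children of `u`. -/
inductive IsMarkedChild : MarkedTree → MarkedTree → Prop
  | intro (child : ℕ → MarkedTree) (mark : ℕ → Bool) (n : ℕ) (hn : mark n = true) :
    IsMarkedChild (child n) (node child mark)

/-- `IsChild v u` says that `v` occurs among the children of `u`. -/
inductive IsChild : MarkedTree → MarkedTree → Prop
  | intro (child : ℕ → MarkedTree) (mark : ℕ → Bool) (n : ℕ) : IsChild (child n) (node child mark)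

theorem wellFounded_isChild : WellFounded IsChild := by
  refine ⟨fun u => ?_⟩
  induction u with
  | leaf => exact ⟨_, nofun⟩
  | node child mark ih => exact ⟨_, fun | _, .intro _ _ n => ih n⟩

theorem IsMarkedChild.isChild {u v : MarkedTree} : IsMarkedChild v u → IsChild v u
  | .intro child mark n _ => .intro child mark n

open scoped Classical in
/-- The symmetric `0`-`1` matrix on trees recording which of two trees is a marked child of the
other. -/
noncomputable def matrix (u v : MarkedTree) : Bool :=
  decide (IsMarkedChild v u ∨ IsMarkedChild u v)

theorem matrix_comm (u v : MarkedTree) : matrix u v = matrix v u :=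
  decide_eq_decide.2 or_comm

theorem isMarkedChild_node_iff {child : ℕ → MarkedTree} {b : MarkedTree → Bool} {n : ℕ} :
    IsMarkedChild (child n) (node child (b ∘ child)) ↔ b (child n) = true := by
  refine ⟨fun h => ?_, .intro child (b ∘ child) n⟩
  generalize child n = v at h
  obtain ⟨_, _, _, hn⟩ := h
  exact hn

theorem matrix_node (child : ℕ → MarkedTree) (b : MarkedTree → Bool) (n : ℕ) :
    matrix (node child (b ∘ child)) (child n) = b (child n) := by
  have hasymm : ¬ IsMarkedChild (node child (b ∘ child)) (child n) := fun h =>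
    wellFounded_isChild.asymmetric _ _ h.isChild (.intro child _ n)
  simp only [matrix, isMarkedChild_node_iff, hasymm, or_false, Bool.decide_eq_true]

theorem countablyFull_range_matrix : CountablyFull (range matrix) := by
  intro A hA b
  obtain rfl | hne := A.eq_empty_or_nonempty
  · exact ⟨matrix leaf, mem_range_self _, eqOn_empty _ _⟩
  · obtain ⟨child, rfl⟩ := hA.exists_eq_range hne
    exact ⟨_, ⟨node child (b ∘ child), rfl⟩, eqOn_range.2 (funext fun n => matrix_node child b n)⟩

theorem matrix_injective : Injective matrix := by
  classical
  intro u v huv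
  obtain ⟨_, ⟨w, rfl⟩, hw⟩ := countablyFull_range_matrix {u, v} (by simp) fun x => decide (x = u)
  have hu : matrix w u = true := by simpa using hw (mem_insert u {v})
  have hv : matrix w v = decide (v = u) := hw (mem_insert_of_mem u rfl)
  rw [matrix_comm, huv, matrix_comm, hv] at hu
  exact (of_decide_eq_true hu).symm

instance : Infinite MarkedTree := by
  refine not_finite_iff_infinite.1 fun _ => ?_
  refine cantor_surjective (fun u v => matrix u v = true) fun s => ?_
  classical
  obtain ⟨_, ⟨u, rfl⟩, hu⟩ := countablyFull_range_matrix univ (to_countable _) fun v => decide (s v)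
  exact ⟨u, funext fun v => by simp [hu (mem_univ v)]⟩

noncomputable instance : TopologicalSpace MarkedTree := .induced matrix inferInstance

theorem isEmbedding_matrix : IsEmbedding matrix := ⟨⟨rfl⟩, matrix_injective⟩

instance : TotallySeparatedSpace MarkedTree :=
  totallySeparatedSpace_iff_exists_isClopen.2 fun u v huv => by
    obtain ⟨w, hw⟩ := ne_iff.1 (matrix_injective.ne huv)
    exact ⟨(fun x => matrix x w) ⁻¹' {matrix u w}, (isClopen_discrete _).preimage
      ((continuous_apply w).comp isEmbedding_matrix.continuous), rfl, Ne.symm hw⟩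

instance : CompletelyRegularSpace MarkedTree := isEmbedding_matrix.isInducing.completelyRegularSpace

instance : BaireSpace (Cp MarkedTree Bool) := by
  refine CountablyFull.baireSpace (C := {f : MarkedTree → Bool | Continuous f}) fun A hA b => ?_
  obtain ⟨_, ⟨u, rfl⟩, hu⟩ := countablyFull_range_matrix A hA b
  refine ⟨matrix u, ?_, hu⟩
  exact ((continuous_apply u).comp isEmbedding_matrix.continuous).congr fun v => matrix_comm v u

end MarkedTree

end TestSpace

theorem statement8_general (K : Type*) [TopologicalSpace K] [CompactSpace K] [T2Space K] :
    List.TFAE [PiMonolithic K,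
      ∀ (X : Type) [TopologicalSpace X] [TotallySeparatedSpace X],
        BaireSpace (Cp X Bool) → BaireSpace (Cp X K),
      BaireSpace (Cp MarkedTree K)] := by
  tfae_have 1 → 2 := fun hK _ _ _ hX => hK.baireSpace_cp hX
  tfae_have 2 → 3 := fun h => h MarkedTree inferInstance
  tfae_have 3 → 1 := fun h => .of_baireSpace_cp MarkedTree.isEmbedding_matrix.isInducing
    MarkedTree.countablyFull_range_matrix h
  tfae_finish

/-- A compact Hausdorff space `K` is π-monolithic iff for every totally disconnected
(totally separated) Tychonoff space `X` such that `C_p(X, 𝔻)` is Baire, the space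
`C_p(X, K)` is Baire. Here `𝔻 = {0,1}` is realized as `Bool`. -/
theorem statement8 (K : Type*) [TopologicalSpace K] [CompactSpace K] [T2Space K] :
    PiMonolithic K ↔
      ∀ (X : Type) (_ : TopologicalSpace X), T1Space X → CompletelyRegularSpace X →
        TotallySeparatedSpace X → BaireSpace (Cp X Bool) → BaireSpace (Cp X K) := by
  exact ⟨fun hK X _ _ _ _ => ((statement8_general K).out 0 1 rfl rfl).1 hK X,
    fun h => ((statement8_general K).out 0 2 rfl rfl).2
      (h MarkedTree _ inferInstance inferInstance inferInstance inferInstance)⟩
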